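/- Let M ≥ 2 and let μ̂_j = A_j y + b_j (j = 1,…,M) be affine estimators with ‖A_j‖_op ≤ 1 for all j, where the noise ξ has i.i.d. N(0,σ²) coordinates. Let θ̂_pen be any minimizer over the simplex Λ^M of H_pen(θ) = C_p(θ) + (1/2)pen(θ). Then in expectation, E‖μ̂_{θ̂_pen} − f‖² ≤ E[min_{j=1,…,M} ‖μ̂_j − f‖²] + 92σ² log(eM). -/

import Mathlib

open MeasureTheory ProbabilityTheory Finset

noncomputable section

/-- Squared Euclidean norm on `Fin n → ℝ`. -/
def sqNorm {n : ℕ} (v : Fin n → ℝ) : ℝ := ∑ i, (v i) ^ 2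

/-- The simplex `Λ^M` of probability vectors in `ℝ^M`. -/
def simplex (M : ℕ) : Set (Fin M → ℝ) := {θ | (∀ j, 0 ≤ θ j) ∧ ∑ j, θ j = 1}

/-- Operator norm (ℓ²→ℓ²) of a square matrix. -/
def opNorm {n : ℕ} (A : Matrix (Fin n) (Fin n) ℝ) : ℝ :=
  sSup {c | ∃ x : Fin n → ℝ, sqNorm x ≤ 1 ∧ c = Real.sqrt (sqNorm (A.mulVec x))}

/-- The distribution of a vector with i.i.d. `N(0,σ²)` coordinates. -/
def gaussPi (n : ℕ) (σ : ℝ) : Measure (Fin n → ℝ) :=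
  Measure.pi fun _ => gaussianReal 0 ⟨σ ^ 2, sq_nonneg σ⟩

/-- The aggregated affine estimator `μ̂_θ = A_θ y + b_θ = ∑_j θ_j (A_j y + b_j)`. -/
def muV {n M : ℕ} (A : Fin M → Matrix (Fin n) (Fin n) ℝ) (b : Fin M → Fin n → ℝ)
    (y : Fin n → ℝ) (θ : Fin M → ℝ) : Fin n → ℝ :=
  ∑ j, θ j • ((A j).mulVec y + b j)

/-- Mallows' `C_p` criterion. -/
def Cp {n M : ℕ} (A : Fin M → Matrix (Fin n) (Fin n) ℝ) (b : Fin M → Fin n → ℝ)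
    (σ : ℝ) (y : Fin n → ℝ) (θ : Fin M → ℝ) : ℝ :=
  sqNorm (muV A b y θ) - 2 * ∑ i, y i * muV A b y θ i
    + 2 * σ ^ 2 * ∑ j, θ j * (A j).trace

/-- The penalty `pen(θ) = ∑_j θ_j ‖μ̂_θ - μ̂_j‖²`. -/
def pen {n M : ℕ} (A : Fin M → Matrix (Fin n) (Fin n) ℝ) (b : Fin M → Fin n → ℝ)
    (y : Fin n → ℝ) (θ : Fin M → ℝ) : ℝ :=
  ∑ j, θ j * sqNorm (muV A b y θ - ((A j).mulVec y + b j))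

/-- The penalized criterion `H_pen(θ) = C_p(θ) + pen(θ)/2`. -/
def Hpen {n M : ℕ} (A : Fin M → Matrix (Fin n) (Fin n) ℝ) (b : Fin M → Fin n → ℝ)
    (σ : ℝ) (y : Fin n → ℝ) (θ : Fin M → ℝ) : ℝ :=
  Cp A b σ y θ + pen A b y θ / 2

section Aux

open scoped Matrix
open Matrix

lemma sqNorm_eq_dot {n : ℕ} (v : Fin n → ℝ) : sqNorm v = v ⬝ᵥ v := by
  simp [sqNorm, dotProduct, sq]

lemma sqNorm_nonneg' {n : ℕ} (v : Fin n → ℝ) : 0 ≤ sqNorm v :=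
  Finset.sum_nonneg fun i _ => sq_nonneg _

/-- abstract form of Hpen -/
lemma Hpen_eq {n M : ℕ} (A : Fin M → Matrix (Fin n) (Fin n) ℝ) (b : Fin M → Fin n → ℝ)
    (σ : ℝ) (y : Fin n → ℝ) (θ : Fin M → ℝ) (hθ : θ ∈ simplex M) :
    Hpen A b σ y θ = sqNorm (muV A b y θ) / 2 +
      ∑ j, θ j * (sqNorm ((A j).mulVec y + b j) / 2 - 2 * (y ⬝ᵥ ((A j).mulVec y + b j))
        + 2 * σ ^ 2 * (A j).trace) := by
  unfold Hpen Cp pen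
  have h1 : ∑ i, y i * muV A b y θ i = ∑ j, θ j * (y ⬝ᵥ ((A j).mulVec y + b j)) := by
    change y ⬝ᵥ muV A b y θ = _
    simp only [muV, dotProduct_sum, dotProduct_smul, smul_eq_mul]
  have h2 : muV A b y θ ⬝ᵥ muV A b y θ
      = ∑ j, θ j * (muV A b y θ ⬝ᵥ ((A j).mulVec y + b j)) := by
    conv_lhs => rw [show muV A b y θ ⬝ᵥ muV A b y θ
      = muV A b y θ ⬝ᵥ ∑ j, θ j • ((A j).mulVec y + b j) from rfl]
    simp only [dotProduct_sum, dotProduct_smul, smul_eq_mul]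
  have h3 : ∑ j, θ j * sqNorm (muV A b y θ - ((A j).mulVec y + b j)) =
      (∑ j, θ j * sqNorm ((A j).mulVec y + b j)) - sqNorm (muV A b y θ) := by
    have : ∀ j, θ j * sqNorm (muV A b y θ - ((A j).mulVec y + b j)) =
        θ j * sqNorm (muV A b y θ) - 2 * (θ j * (muV A b y θ ⬝ᵥ ((A j).mulVec y + b j)))
          + θ j * sqNorm ((A j).mulVec y + b j) := by
      intro j
      generalize (A j).mulVec y + b j = v
      simp only [sqNorm_eq_dot, sub_dotProduct, dotProduct_sub]
      rw [dotProduct_comm v]; ring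
    simp only [this, Finset.sum_add_distrib, Finset.sum_sub_distrib, ← Finset.mul_sum,
      ← Finset.sum_mul, hθ.2, ← h2]
    rw [← sqNorm_eq_dot]; ring
  rw [h1, h3]
  simp only [mul_add, mul_sub, Finset.sum_add_distrib, Finset.sum_sub_distrib]
  have e1 : ∑ j, θ j * (sqNorm ((A j).mulVec y + b j) / 2)
    = (∑ j, θ j * sqNorm ((A j).mulVec y + b j)) / 2 := by
    rw [Finset.sum_div]; exact Finset.sum_congr rfl fun _ _ => by ring
  have e2 : ∑ j, θ j * (2 * (y ⬝ᵥ ((A j).mulVec y + b j)))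
    = 2 * ∑ j, θ j * (y ⬝ᵥ ((A j).mulVec y + b j)) := by
    rw [Finset.mul_sum]; exact Finset.sum_congr rfl fun _ _ => by ring
  have e3 : ∑ j, θ j * (2 * σ ^ 2 * (A j).trace)
    = 2 * σ ^ 2 * ∑ j, θ j * (A j).trace := by
    rw [Finset.mul_sum]; exact Finset.sum_congr rfl fun _ _ => by ring
  simp only [← mul_add, e1, e2, e3]
  ring

/-- the process -/
def ZZ {n : ℕ} (σ : ℝ) (B : Matrix (Fin n) (Fin n) ℝ) (c x : Fin n → ℝ) : ℝ :=
  2 * (x ⬝ᵥ (B *ᵥ x + c)) - 2 * σ ^ 2 * B.trace - sqNorm (B *ᵥ x + c) / 2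

lemma pointwise {n M : ℕ} (A : Fin M → Matrix (Fin n) (Fin n) ℝ) (b : Fin M → Fin n → ℝ)
    (σ : ℝ) (f x : Fin n → ℝ) (θ : Fin M → ℝ) (hθ : θ ∈ simplex M)
    (hmin : ∀ θ' ∈ simplex M, Hpen A b σ (f + x) θ ≤ Hpen A b σ (f + x) θ') (k : Fin M) :
    sqNorm (muV A b (f + x) θ - f) ≤ sqNorm ((A k).mulVec (f + x) + b k - f) +
      ∑ j, θ j * ZZ σ (A j - A k) ((A j - A k) *ᵥ f + (b j - b k)) x := by
  set y := f + x with hy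
  set m : Fin M → Fin n → ℝ := fun j => (A j).mulVec y + b j with hm
  set ℓ : Fin M → ℝ := fun j => sqNorm (m j) / 2 - 2 * (y ⬝ᵥ m j) + 2 * σ ^ 2 * (A j).trace with hℓ
  have hH : ∀ θ' ∈ simplex M, Hpen A b σ y θ' = sqNorm (muV A b y θ') / 2 + ∑ j, θ' j * ℓ j :=
    fun θ' h' => Hpen_eq A b σ y θ' h'
  set u := muV A b y θ with hu
  have hus : u = ∑ j, θ j • m j := rfl
  have key : ∀ t : ℝ, 0 < t → t ≤ 1 →
      0 ≤ u ⬝ᵥ (m k - u) + t / 2 * sqNorm (m k - u) + ℓ k - ∑ j, θ j * ℓ j := by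
    intro t ht ht1
    have hmem : (fun j => (1 - t) * θ j + t * (if j = k then 1 else 0)) ∈ simplex M := by
      refine ⟨fun j => ?_, ?_⟩
      · have := hθ.1 j
        have : 0 ≤ (if j = k then (1:ℝ) else 0) := by split_ifs <;> norm_num
        have : 0 ≤ 1 - t := by linarith
        have := hθ.1 j
        positivity
      · simp [Finset.sum_add_distrib, ← Finset.mul_sum, hθ.2]
    have h := hmin _ hmem
    rw [hH _ hθ, hH _ hmem] at h
    have e1 : muV A b y (fun j => (1 - t) * θ j + t * (if j = k then 1 else 0))
        = u + t • (m k - u) := by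
      have : muV A b y (fun j => (1 - t) * θ j + t * (if j = k then 1 else 0))
        = (1 - t) • u + t • m k := by
        rw [hus]
        simp only [muV, add_smul, Finset.sum_add_distrib, mul_smul, Finset.smul_sum]
        congr 1
        simp [hm, Finset.sum_add_distrib]
      rw [this]
      ext i; simp; ring
    have e2 : ∑ j, ((1 - t) * θ j + t * (if j = k then 1 else 0)) * ℓ j
        = (1 - t) * ∑ j, θ j * ℓ j + t * ℓ k := by
      simp [add_mul, Finset.sum_add_distrib, mul_assoc, Finset.mul_sum]
    rw [e1, e2] at h
    have e3 : sqNorm (u + t • (m k - u)) = sqNorm u + 2 * t * (u ⬝ᵥ (m k - u))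
        + t ^ 2 * sqNorm (m k - u) := by
      generalize m k - u = v
      simp only [sqNorm_eq_dot, add_dotProduct, dotProduct_add, smul_dotProduct, dotProduct_smul,
        smul_eq_mul]
      rw [dotProduct_comm v u]; ring
    rw [e3] at h
    rw [← hu] at h
    have : 0 ≤ t * (u ⬝ᵥ (m k - u) + t / 2 * sqNorm (m k - u) + ℓ k - ∑ j, θ j * ℓ j) := by
      linarith
    exact nonneg_of_mul_nonneg_right this ht
  have key0 : 0 ≤ u ⬝ᵥ (m k - u) + ℓ k - ∑ j, θ j * ℓ j := by
    by_contra hneg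
    push Not at hneg
    have hs := sqNorm_nonneg' (m k - u)
    set s := sqNorm (m k - u)
    set d := u ⬝ᵥ (m k - u) + ℓ k - ∑ j, θ j * ℓ j with hd
    have hpos : 0 < s - d + 1 := by linarith
    have := key (min 1 (-d / (s - d + 1))) (lt_min one_pos (by apply div_pos <;> linarith))
      (min_le_left _ _)
    have h2 : min 1 (-d / (s - d + 1)) * s ≤ -d := by
      calc _ ≤ -d / (s - d + 1) * s := by gcongr; exact min_le_right _ _
        _ ≤ -d / (s - d + 1) * (s - d + 1) := by
          apply mul_le_mul_of_nonneg_left; linarith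
          apply div_nonneg <;> linarith
        _ = -d := by field_simp
    linarith
  have hZ : ∀ j, ZZ σ (A j - A k) ((A j - A k) *ᵥ f + (b j - b k)) x =
      2 * (x ⬝ᵥ m j) - 2 * (x ⬝ᵥ m k) - 2 * σ ^ 2 * (A j).trace + 2 * σ ^ 2 * (A k).trace
       - sqNorm (m j) / 2 + (m j ⬝ᵥ m k) - sqNorm (m k) / 2 := by
    intro j
    have : (A j - A k) *ᵥ x + ((A j - A k) *ᵥ f + (b j - b k)) = m j - m k := by
      simp only [hm, hy, sub_mulVec, mulVec_add]; abel
    unfold ZZ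
    rw [this]
    simp only [sqNorm_eq_dot, sub_dotProduct, dotProduct_sub, trace_sub]
    rw [dotProduct_comm (m k) (m j)]; ring
  have hsum : ∑ j, θ j * ZZ σ (A j - A k) ((A j - A k) *ᵥ f + (b j - b k)) x =
      - (∑ j, θ j * ℓ j) - 2 * (f ⬝ᵥ u) - 2 * (x ⬝ᵥ m k) + 2 * σ ^ 2 * (A k).trace
       + (u ⬝ᵥ m k) - sqNorm (m k) / 2 := by
    have e : ∀ j, θ j * ZZ σ (A j - A k) ((A j - A k) *ᵥ f + (b j - b k)) x =
      - (θ j * ℓ j) - 2 * (θ j * (f ⬝ᵥ m j)) + θ j * (m j ⬝ᵥ m k)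
       + θ j * (- 2 * (x ⬝ᵥ m k) + 2 * σ ^ 2 * (A k).trace - sqNorm (m k) / 2) := by
      intro j
      rw [hZ j]
      simp only [hℓ, hy, add_dotProduct]
      ring
    have f1 : f ⬝ᵥ u = ∑ j, θ j * (f ⬝ᵥ m j) := by
      rw [hus]; simp only [dotProduct_sum, dotProduct_smul, smul_eq_mul]
    have f2 : u ⬝ᵥ m k = ∑ j, θ j * (m j ⬝ᵥ m k) := by
      rw [hus]; simp only [sum_dotProduct, smul_dotProduct, smul_eq_mul]
    simp only [e, Finset.sum_add_distrib, Finset.sum_sub_distrib, ← Finset.mul_sum,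
      ← Finset.sum_mul, hθ.2, Finset.sum_neg_distrib, ← f1, ← f2]
    ring
  rw [hsum]
  change sqNorm (u - f) ≤ sqNorm (m k - f) + _
  have hℓk : ℓ k = sqNorm (m k) / 2 - 2 * (f ⬝ᵥ m k) - 2 * (x ⬝ᵥ m k)
      + 2 * σ ^ 2 * (A k).trace := by
    simp only [hℓ, hy, add_dotProduct]; ring
  rw [hℓk] at key0
  simp only [sqNorm_eq_dot, sub_dotProduct, dotProduct_sub] at key0 ⊢
  rw [dotProduct_comm u f, dotProduct_comm (m k) f]
  linarith

lemma gauss1 (a w : ℝ) (ha : a ≤ 1 / 23) :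
    Integrable (fun x : ℝ => Real.exp (a * x ^ 2 + w * x)) (gaussianReal 0 1) ∧
    ∫ x, Real.exp (a * x ^ 2 + w * x) ∂(gaussianReal 0 1) ≤
      Real.exp (a + 46 / 21 * a ^ 2 + 23 / 42 * w ^ 2) := by
  have hb : (0:ℝ) < 1 / 2 - a := by linarith
  have hcexp : ∀ x : ℝ, gaussianPDFReal 0 1 x • Real.exp (a * x ^ 2 + w * x)
      = (√(2 * Real.pi))⁻¹ * Real.exp (w ^ 2 / (4 * (1 / 2 - a))) *
        Real.exp (-(1 / 2 - a) * (x - w / (2 * (1 / 2 - a))) ^ 2) := by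
    intro x
    simp only [gaussianPDFReal, smul_eq_mul, NNReal.coe_one, mul_one, sub_zero]
    rw [mul_assoc, mul_assoc, ← Real.exp_add, ← Real.exp_add]
    congr 2
    have h3 : 1 - 2 * a ≠ 0 := by linarith
    field_simp
    ring
  have hInt : Integrable (fun x : ℝ => gaussianPDFReal 0 1 x • Real.exp (a * x ^ 2 + w * x)) := by
    simp only [hcexp]
    exact ((integrable_exp_neg_mul_sq hb).comp_sub_right _).const_mul _
  constructor
  · rw [gaussianReal_of_var_ne_zero _ one_ne_zero, gaussianPDF_def,
      integrable_withDensity_iff_integrable_smul' (by fun_prop) (by simp)]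
    refine hInt.congr (ae_of_all _ fun x => ?_)
    simp [ENNReal.toReal_ofReal (gaussianPDFReal_nonneg 0 1 x)]
  · rw [integral_gaussianReal_eq_integral_smul one_ne_zero]
    simp only [hcexp]
    rw [integral_const_mul, integral_sub_right_eq_self (fun x => Real.exp (-(1 / 2 - a) * x ^ 2)),
      integral_gaussian]
    have e1 : (√(2 * Real.pi))⁻¹ * √(Real.pi / (1 / 2 - a)) ≤ Real.exp (a + 46 / 21 * a ^ 2) := by
      rw [← Real.sqrt_inv, ← Real.sqrt_mul (by positivity)]
      apply Real.sqrt_le_iff.2 ⟨(Real.exp_pos _).le, ?_⟩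
      have : (2 * Real.pi)⁻¹ * (Real.pi / (1 / 2 - a)) = 2 * a / (1 - 2 * a) + 1 := by
        have := Real.pi_pos
        have h3 : 1 - 2 * a ≠ 0 := by linarith
        have h4 : 1 / 2 - a ≠ 0 := by linarith
        field_simp
        ring
      rw [this]
      refine (Real.add_one_le_exp _).trans ?_
      rw [← Real.exp_nat_mul]
      apply Real.exp_le_exp.2
      rw [div_le_iff₀ (by linarith)]
      push_cast
      nlinarith [mul_nonneg (sq_nonneg a) (by linarith : 0 ≤ 1 / 23 - a)]
    have e2 : Real.exp (w ^ 2 / (4 * (1 / 2 - a))) ≤ Real.exp (23 / 42 * w ^ 2) := by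
      apply Real.exp_le_exp.2
      rw [div_le_iff₀ (by linarith)]
      nlinarith [mul_nonneg (sq_nonneg w) (by linarith : 0 ≤ 1 / 23 - a)]
    rw [Real.exp_add (a + 46 / 21 * a ^ 2)]
    calc _ = ((√(2 * Real.pi))⁻¹ * √(Real.pi / (1 / 2 - a))) *
          Real.exp (w ^ 2 / (4 * (1 / 2 - a))) := by ring
      _ ≤ _ := by gcongr

lemma gaussPi_eq (n : ℕ) (σ : ℝ) :
    gaussPi n σ = (Measure.pi fun _ : Fin n => gaussianReal 0 1).map (fun x => σ • x) := by
  have : (fun x : Fin n → ℝ => σ • x) = fun x i => σ * x i := by ext; simp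
  rw [this, Measure.pi_map_pi (fun i => by fun_prop)]
  simp only [gaussianReal_map_const_mul, gaussPi, mul_zero, mul_one]
  rfl

lemma rot {n : ℕ} (U : Matrix (Fin n) (Fin n) ℝ) (hU : Uᵀ * U = 1) :
    (Measure.pi fun _ : Fin n => gaussianReal 0 1).map (fun x => U *ᵥ x)
      = Measure.pi fun _ : Fin n => gaussianReal 0 1 := by
  have hn : ∀ x : EuclideanSpace ℝ (Fin n), ‖toEuclideanLin U x‖ = ‖x‖ := by
    intro x
    have : ‖toEuclideanLin U x‖ ^ 2 = ‖x‖ ^ 2 := by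
      rw [EuclideanSpace.real_norm_sq_eq, EuclideanSpace.real_norm_sq_eq]
      have : (U *ᵥ x.ofLp) ⬝ᵥ (U *ᵥ x.ofLp) = x.ofLp ⬝ᵥ x.ofLp := by
        rw [dotProduct_mulVec, ← mulVec_transpose, mulVec_mulVec, hU, one_mulVec]
      simpa [dotProduct, sq] using this
    exact (sq_eq_sq₀ (norm_nonneg _) (norm_nonneg _)).1 this
  let L : EuclideanSpace ℝ (Fin n) →ₗᵢ[ℝ] EuclideanSpace ℝ (Fin n) := ⟨toEuclideanLin U, hn⟩
  let e := L.toLinearIsometryEquiv rfl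
  have h1 := stdGaussian_map e
  rw [← map_pi_eq_stdGaussian, Measure.map_map (by fun_prop) (by fun_prop)] at h1
  have h2 := congrArg (Measure.map (WithLp.ofLp : EuclideanSpace ℝ (Fin n) → (Fin n → ℝ))) h1
  rw [Measure.map_map (by fun_prop) (by fun_prop), Measure.map_map (by fun_prop) (by fun_prop)] at h2
  exact h2.trans Measure.map_id

lemma spec {n : ℕ} (S : Matrix (Fin n) (Fin n) ℝ) (hS : Sᵀ = S) :
    ∃ (U : Matrix (Fin n) (Fin n) ℝ) (d : Fin n → ℝ), Uᵀ * U = 1 ∧ U * Uᵀ = 1 ∧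
      Uᵀ * S * U = diagonal d := by
  have hA : S.IsHermitian := by simpa [Matrix.IsHermitian] using hS
  have h := hA.conjStarAlgAut_star_eigenvectorUnitary
  rw [Unitary.conjStarAlgAut_star_apply] at h
  refine ⟨hA.eigenvectorUnitary, hA.eigenvalues, ?_, ?_, ?_⟩
  · exact Unitary.coe_star_mul_self hA.eigenvectorUnitary
  · exact Unitary.coe_mul_star_self hA.eigenvectorUnitary
  · exact h

lemma dot_mulVec_t {n : ℕ} (B : Matrix (Fin n) (Fin n) ℝ) (x z : Fin n → ℝ) :
    x ⬝ᵥ (B *ᵥ z) = (Bᵀ *ᵥ x) ⬝ᵥ z := by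
  rw [dotProduct_mulVec, mulVec_transpose]

lemma sqNorm_transpose {n : ℕ} (B : Matrix (Fin n) (Fin n) ℝ)
    (hB : ∀ x, sqNorm (B *ᵥ x) ≤ 4 * sqNorm x) (x : Fin n → ℝ) :
    sqNorm (Bᵀ *ᵥ x) ≤ 4 * sqNorm x := by
  have h1 := hB (Bᵀ *ᵥ x)
  have h2 := sqNorm_nonneg' ((2:ℝ) • x - (1/2:ℝ) • (B *ᵥ (Bᵀ *ᵥ x)))
  have h3 : x ⬝ᵥ (B *ᵥ (Bᵀ *ᵥ x)) = sqNorm (Bᵀ *ᵥ x) := by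
    rw [dot_mulVec_t, sqNorm_eq_dot]
  generalize B *ᵥ (Bᵀ *ᵥ x) = v at *
  rw [← h3] at h1 ⊢
  clear hB
  simp only [sqNorm_eq_dot, sub_dotProduct, dotProduct_sub, smul_dotProduct, dotProduct_smul,
    smul_eq_mul] at h1 h2 ⊢
  rw [dotProduct_comm v x] at h2
  linarith

lemma trace_tt {n : ℕ} (B : Matrix (Fin n) (Fin n) ℝ) :
    (Bᵀ * B).trace = ∑ i, ∑ j, B i j ^ 2 := by
  rw [Finset.sum_comm]
  simp [trace, mul_apply, sq]

lemma trace_sq_le {n : ℕ} (B : Matrix (Fin n) (Fin n) ℝ)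
    (hB : ∀ x, sqNorm (B *ᵥ x) ≤ 4 * sqNorm x) :
    ∑ i, ∑ j, (B + Bᵀ - (1/2:ℝ) • (Bᵀ * B)) i j ^ 2 ≤ 9 * ∑ i, ∑ j, B i j ^ 2 := by
  have h1 : ∑ i, ∑ j, (Bᵀ) i j ^ 2 = ∑ i, ∑ j, B i j ^ 2 := by
    rw [Finset.sum_comm]; rfl
  have h2 : ∑ i, ∑ j, (Bᵀ * B) i j ^ 2 ≤ 4 * ∑ i, ∑ j, B i j ^ 2 := by
    rw [Finset.sum_comm, Finset.sum_comm (f := fun i j => B i j ^ 2), Finset.mul_sum]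
    apply Finset.sum_le_sum
    intro j _
    exact sqNorm_transpose B hB (fun i => B i j)
  calc _ ≤ ∑ i, ∑ j, (3 * B i j ^ 2 + 3 * (Bᵀ) i j ^ 2 + 3 / 4 * (Bᵀ * B) i j ^ 2) := by
        apply Finset.sum_le_sum; intro i _
        apply Finset.sum_le_sum; intro j _
        simp only [Matrix.sub_apply, Matrix.add_apply, Matrix.smul_apply, smul_eq_mul]
        generalize B i j = p
        generalize Bᵀ i j = q
        generalize (Bᵀ * B) i j = r
        nlinarith [sq_nonneg (p - q), sq_nonneg (p + r / 2), sq_nonneg (q + r / 2)]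
    _ = 3 * (∑ i, ∑ j, B i j ^ 2) + 3 * (∑ i, ∑ j, (Bᵀ) i j ^ 2)
        + 3 / 4 * ∑ i, ∑ j, (Bᵀ * B) i j ^ 2 := by
        simp only [Finset.sum_add_distrib, Finset.mul_sum]
    _ ≤ _ := by rw [h1]; linarith

lemma key_std {n : ℕ} (B : Matrix (Fin n) (Fin n) ℝ) (c : Fin n → ℝ)
    (hB : ∀ x, sqNorm (B *ᵥ x) ≤ 4 * sqNorm x) :
    Integrable (fun g => Real.exp (ZZ 1 B c g / 46)) (Measure.pi fun _ : Fin n => gaussianReal 0 1) ∧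
    ∫ g, Real.exp (ZZ 1 B c g / 46) ∂(Measure.pi fun _ : Fin n => gaussianReal 0 1) ≤ 1 := by
  set γ := Measure.pi fun _ : Fin n => gaussianReal 0 1 with hγ
  set S := B + Bᵀ - (1/2:ℝ) • (Bᵀ * B) with hS
  have hSs : Sᵀ = S := by
    simp [hS, transpose_sub, transpose_add, transpose_smul, transpose_mul, add_comm]
  obtain ⟨U, d, hU1, hU2, hUd⟩ := spec S hSs
  set v := (2:ℝ) • c - Bᵀ *ᵥ c with hv
  set w := Uᵀ *ᵥ v with hw
  have hquad : ∀ g, g ⬝ᵥ (S *ᵥ g) = 2 * (g ⬝ᵥ (B *ᵥ g)) - sqNorm (B *ᵥ g) / 2 := by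
    intro g
    simp only [hS, sub_mulVec, add_mulVec, smul_mulVec, dotProduct_sub, dotProduct_add,
      dotProduct_smul, smul_eq_mul, ← mulVec_mulVec, sqNorm_eq_dot]
    rw [dot_mulVec_t Bᵀ g g, dot_mulVec_t Bᵀ, transpose_transpose, dotProduct_comm (B *ᵥ g) g]
    ring
  have hZ : ∀ g, ZZ 1 B c g = g ⬝ᵥ (S *ᵥ g) + v ⬝ᵥ g - sqNorm c / 2 - 2 * B.trace := by
    intro g
    rw [hquad]
    simp only [ZZ, hv, sqNorm_eq_dot, dotProduct_add, add_dotProduct, sub_dotProduct,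
      smul_dotProduct, smul_eq_mul]
    rw [dotProduct_comm (B *ᵥ g) c, dot_mulVec_t B c g, dotProduct_comm g c]
    ring
  have hdiag : ∀ h, (U *ᵥ h) ⬝ᵥ (S *ᵥ (U *ᵥ h)) = ∑ i, d i * h i ^ 2 := by
    intro h
    rw [dotProduct_comm, dot_mulVec_t, mulVec_mulVec, mulVec_mulVec, hUd]
    simp only [dotProduct, mulVec_diagonal]
    exact Finset.sum_congr rfl fun _ _ => by ring
  have hZU : ∀ h, ZZ 1 B c (U *ᵥ h) / 46 =
      (∑ i, (d i / 46 * h i ^ 2 + w i / 46 * h i)) + (- sqNorm c / 2 - 2 * B.trace) / 46 := by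
    intro h
    rw [hZ, hdiag, dot_mulVec_t]
    rw [← hw]
    simp only [dotProduct, Finset.sum_add_distrib, div_mul_eq_mul_div, ← Finset.sum_div]
    ring
  have hd2 : ∀ i, d i ≤ 2 := by
    intro i
    have h1 := hdiag (Pi.single i 1)
    have h2 : ∑ j, d j * (Pi.single i 1 : Fin n → ℝ) j ^ 2 = d i := by
      simp [Pi.single_apply]
    have h3 : sqNorm (U *ᵥ Pi.single i 1) = 1 := by
      rw [sqNorm_eq_dot, dot_mulVec_t, mulVec_mulVec, hU1, one_mulVec]
      simp
    rw [h2, hquad] at h1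
    rw [← h1]
    have h4 := sqNorm_nonneg' ((2:ℝ) • (U *ᵥ Pi.single i 1) - B *ᵥ (U *ᵥ Pi.single i 1))
    generalize U *ᵥ Pi.single i 1 = u at *
    simp only [sqNorm_eq_dot, sub_dotProduct, dotProduct_sub, smul_dotProduct, dotProduct_smul,
      smul_eq_mul] at *
    rw [dotProduct_comm (B *ᵥ u) u] at h4
    linarith
  have hsumd : ∑ i, d i = 2 * B.trace - (∑ i, ∑ j, B i j ^ 2) / 2 := by
    have : (Uᵀ * S * U).trace = S.trace := by
      rw [trace_mul_comm, ← mul_assoc, hU2, one_mul]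
    rw [hUd, trace_diagonal] at this
    rw [this, hS]
    simp only [trace_sub, trace_add, trace_smul, trace_transpose, smul_eq_mul, trace_tt]
    ring
  have hsumd2 : ∑ i, d i ^ 2 ≤ 9 * ∑ i, ∑ j, B i j ^ 2 := by
    have e1 : ∑ i, d i ^ 2 = (diagonal d * diagonal d).trace := by
      rw [diagonal_mul_diagonal, trace_diagonal]; simp [sq]
    have e2 : diagonal d * diagonal d = Uᵀ * (S * S) * U := by
      rw [← hUd]
      calc _ = Uᵀ * S * (U * Uᵀ) * S * U := by simp only [mul_assoc]
        _ = _ := by rw [hU2]; simp only [mul_assoc, mul_one]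
    have e3 : (Uᵀ * (S * S) * U).trace = ∑ i, ∑ j, S i j ^ 2 := by
      rw [trace_mul_comm, ← mul_assoc, hU2, one_mul, ← trace_tt, hSs]
    rw [e1, e2, e3]
    exact trace_sq_le B hB
  have hsumw : ∑ i, w i ^ 2 ≤ 16 * sqNorm c := by
    have e1 : ∑ i, w i ^ 2 = sqNorm v := by
      change sqNorm w = _
      rw [hw, sqNorm_eq_dot, dot_mulVec_t, transpose_transpose, mulVec_mulVec, hU2, one_mulVec,
        sqNorm_eq_dot]
    rw [e1]
    have h1 := sqNorm_transpose B hB c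
    have h2 := sqNorm_nonneg' ((2:ℝ) • c + Bᵀ *ᵥ c)
    rw [hv]
    simp only [sqNorm_eq_dot, sub_dotProduct, dotProduct_sub, add_dotProduct, dotProduct_add,
      smul_dotProduct, dotProduct_smul, smul_eq_mul] at *
    linarith
  have hg := fun i => gauss1 (d i / 46) (w i / 46) (by have := hd2 i; linarith)
  have hprod : ∀ h : Fin n → ℝ, Real.exp (ZZ 1 B c (U *ᵥ h) / 46) =
      (∏ i, Real.exp (d i / 46 * h i ^ 2 + w i / 46 * h i))
        * Real.exp ((- sqNorm c / 2 - 2 * B.trace) / 46) := by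
    intro h
    rw [hZU, Real.exp_add, Real.exp_sum]
  have hcont : Continuous fun g => Real.exp (ZZ 1 B c g / 46) := by
    unfold ZZ sqNorm
    fun_prop
  have hrot := rot U hU1
  rw [← hγ] at hrot
  have hUm : Measurable fun x => U *ᵥ x := by fun_prop
  constructor
  · rw [← hrot, integrable_map_measure hcont.aestronglyMeasurable hUm.aemeasurable]
    change Integrable (fun h => Real.exp (ZZ 1 B c (U *ᵥ h) / 46)) γ
    simp only [hprod]
    exact (Integrable.fintype_prod (fun i => (hg i).1)).mul_const _
  · rw [← hrot, integral_map hUm.aemeasurable hcont.aestronglyMeasurable]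
    simp only [hprod]
    rw [integral_mul_const, hγ, integral_fintype_prod_eq_prod
      (fun i x => Real.exp (d i / 46 * x ^ 2 + w i / 46 * x))]
    have hle : ∏ i, ∫ x, Real.exp (d i / 46 * x ^ 2 + w i / 46 * x) ∂(gaussianReal 0 1)
        ≤ ∏ i, Real.exp (d i / 46 + 46 / 21 * (d i / 46) ^ 2 + 23 / 42 * (w i / 46) ^ 2) :=
      Finset.prod_le_prod (fun i _ => integral_nonneg fun x => (Real.exp_pos _).le)
        (fun i _ => (hg i).2)
    rw [← Real.exp_sum] at hle
    refine (mul_le_mul_of_nonneg_right hle (Real.exp_pos _).le).trans ?_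
    rw [← Real.exp_add, Real.exp_le_one_iff]
    have : ∑ i, (d i / 46 + 46 / 21 * (d i / 46) ^ 2 + 23 / 42 * (w i / 46) ^ 2)
      = (∑ i, d i) / 46 + (∑ i, d i ^ 2) / (21 * 46) + 23 / 42 / 46 ^ 2 * ∑ i, w i ^ 2 := by
      simp only [Finset.sum_add_distrib, Finset.sum_div, Finset.mul_sum]
      congr 1
      · congr 1
        exact Finset.sum_congr rfl fun _ _ => by ring
      · exact Finset.sum_congr rfl fun _ _ => by ring
    rw [this, hsumd]
    have := sqNorm_nonneg' c
    have : 0 ≤ ∑ i, ∑ j, B i j ^ 2 :=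
      Finset.sum_nonneg fun i _ => Finset.sum_nonneg fun j _ => sq_nonneg _
    linarith

lemma opNorm_bound {n : ℕ} (A : Matrix (Fin n) (Fin n) ℝ) (h : opNorm A ≤ 1) (x : Fin n → ℝ) :
    sqNorm (A *ᵥ x) ≤ sqNorm x := by
  have hcs : ∀ x : Fin n → ℝ, sqNorm (A *ᵥ x) ≤ (∑ i, ∑ j, A i j ^ 2) * sqNorm x := by
    intro x
    unfold sqNorm
    rw [Finset.sum_mul]
    apply Finset.sum_le_sum
    intro i _
    exact Finset.sum_mul_sq_le_sq_mul_sq Finset.univ (fun j => A i j) x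
  have hF : 0 ≤ ∑ i, ∑ j, A i j ^ 2 :=
    Finset.sum_nonneg fun i _ => Finset.sum_nonneg fun j _ => sq_nonneg _
  have hbdd : BddAbove {c | ∃ x : Fin n → ℝ, sqNorm x ≤ 1 ∧ c = Real.sqrt (sqNorm (A.mulVec x))} := by
    refine ⟨√(∑ i, ∑ j, A i j ^ 2), ?_⟩
    rintro c ⟨x, hx, rfl⟩
    apply Real.sqrt_le_sqrt
    exact (hcs x).trans (mul_le_of_le_one_right hF hx)
  rcases (sqNorm_nonneg' x).eq_or_lt with h0 | h0
  · have := hcs x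
    rw [← h0] at this ⊢
    linarith
  · set s := sqNorm x with hs
    have hsm : ∀ (t : ℝ) (v : Fin n → ℝ), sqNorm (t • v) = t ^ 2 * sqNorm v := by
      intro t v; simp [sqNorm, mul_pow, Finset.mul_sum]
    have h1 : sqNorm ((√s)⁻¹ • x) = 1 := by
      rw [hsm, inv_pow, Real.sq_sqrt h0.le, ← hs]; field_simp
    have h2 := (le_csSup hbdd ⟨(√s)⁻¹ • x, h1.le, rfl⟩).trans h
    rw [Real.sqrt_le_one, mulVec_smul, hsm, inv_pow, Real.sq_sqrt h0.le,
      inv_mul_le_iff₀ h0, mul_one] at h2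
    exact h2

lemma diff_bound {n : ℕ} (A B : Matrix (Fin n) (Fin n) ℝ) (hA : opNorm A ≤ 1) (hB : opNorm B ≤ 1)
    (x : Fin n → ℝ) : sqNorm ((A - B) *ᵥ x) ≤ 4 * sqNorm x := by
  have h1 := opNorm_bound A hA x
  have h2 := opNorm_bound B hB x
  have h3 := sqNorm_nonneg' (A *ᵥ x + B *ᵥ x)
  rw [sub_mulVec]
  simp only [sqNorm_eq_dot, sub_dotProduct, dotProduct_sub, add_dotProduct, dotProduct_add] at *
  linarith

lemma key_sigma {n : ℕ} (σ : ℝ) (hσ : σ ≠ 0) (B : Matrix (Fin n) (Fin n) ℝ) (c : Fin n → ℝ)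
    (hB : ∀ x, sqNorm (B *ᵥ x) ≤ 4 * sqNorm x) :
    Integrable (fun g => Real.exp (ZZ σ B c g / (46 * σ ^ 2))) (gaussPi n σ) ∧
    ∫ g, Real.exp (ZZ σ B c g / (46 * σ ^ 2)) ∂(gaussPi n σ) ≤ 1 := by
  have hcont : Continuous fun g => Real.exp (ZZ σ B c g / (46 * σ ^ 2)) := by
    unfold ZZ sqNorm
    fun_prop
  have hm : Measurable fun x : Fin n → ℝ => σ • x := by fun_prop
  have hZ : ∀ g, ZZ σ B c (σ • g) / (46 * σ ^ 2) = ZZ 1 B (σ⁻¹ • c) g / 46 := by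
    intro g
    have e : B *ᵥ (σ • g) + c = σ • (B *ᵥ g + σ⁻¹ • c) := by
      rw [mulVec_smul, smul_add, smul_smul, mul_inv_cancel₀ hσ, one_smul]
    unfold ZZ
    rw [e]
    generalize B *ᵥ g + σ⁻¹ • c = z
    simp only [sqNorm_eq_dot, smul_dotProduct, dotProduct_smul, smul_eq_mul]
    field_simp
  have := key_std B (σ⁻¹ • c) hB
  rw [gaussPi_eq]
  constructor
  · rw [integrable_map_measure hcont.aestronglyMeasurable hm.aemeasurable]
    simpa only [Function.comp_def, hZ] using this.1
  · rw [integral_map hm.aemeasurable hcont.aestronglyMeasurable]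
    simpa only [hZ] using this.2

lemma quad_integrable {n : ℕ} (σ : ℝ) (A : Matrix (Fin n) (Fin n) ℝ) (c f : Fin n → ℝ) :
    Integrable (fun x => sqNorm (A *ᵥ (f + x) + c - f)) (gaussPi n σ) := by
  have e : gaussPi n σ = Measure.pi fun _ => gaussianReal 0 (NNReal.mk (σ ^ 2) (sq_nonneg σ)) := rfl
  rw [e]
  have hc : ∀ j, MemLp (fun x : Fin n → ℝ => x j) 2
      (Measure.pi fun _ => gaussianReal 0 (NNReal.mk (σ ^ 2) (sq_nonneg σ))) := by
    intro j
    have h1 : MemLp (fun x : ℝ => x) 2 (gaussianReal 0 (NNReal.mk (σ ^ 2) (sq_nonneg σ))) :=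
      IsGaussian.memLp_two_id
    exact h1.comp_measurePreserving (measurePreserving_eval _ j)
  unfold sqNorm
  refine integrable_finsetSum _ fun i _ => ?_
  refine MemLp.integrable_sq ?_
  simp only [Pi.sub_apply, Pi.add_apply, mulVec, dotProduct]
  refine MemLp.sub (MemLp.add ?_ (memLp_const _)) (memLp_const _)
  refine memLp_finsetSum _ fun j _ => ?_
  exact ((memLp_const (f j)).add (hc j)).const_mul (A i j)

lemma max_bound (K : ℝ) (hK : 0 < K) (M : ℕ) (hM : 2 ≤ M) (z : Fin M → Fin M → ℝ) (j k : Fin M) :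
    z j k ≤ K * (2 * Real.log M - 1 + (∑ j, ∑ k, Real.exp (z j k / K)) / M ^ 2) := by
  have hM0 : (0:ℝ) < M := by positivity
  have h1 := Real.add_one_le_exp (z j k / K - 2 * Real.log M)
  have h2 : Real.exp (z j k / K - 2 * Real.log M) = Real.exp (z j k / K) / M ^ 2 := by
    rw [Real.exp_sub, mul_comm, Real.exp_mul, Real.exp_log hM0]
    norm_num
  have h3 : Real.exp (z j k / K) ≤ ∑ j, ∑ k, Real.exp (z j k / K) :=
    (Finset.single_le_sum (f := fun k => Real.exp (z j k / K))
      (fun _ _ => (Real.exp_pos _).le) (Finset.mem_univ k)).trans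
    (Finset.single_le_sum (f := fun j => ∑ k, Real.exp (z j k / K))
      (fun _ _ => Finset.sum_nonneg fun _ _ => (Real.exp_pos _).le) (Finset.mem_univ j))
  have h4 : z j k / K ≤ 2 * Real.log M - 1 + (∑ j, ∑ k, Real.exp (z j k / K)) / M ^ 2 := by
    have : Real.exp (z j k / K) / M ^ 2 ≤ (∑ j, ∑ k, Real.exp (z j k / K)) / M ^ 2 := by
      gcongr
    linarith
  rw [div_le_iff₀ hK] at h4
  linarith

end Aux

/-- **Theorem 2.1 (main result), bound in expectation.** -/
theorem sharp_oracle_inequality_expectation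
    {n M : ℕ} (hM : 2 ≤ M) (σ : ℝ) (f : Fin n → ℝ)
    (A : Fin M → Matrix (Fin n) (Fin n) ℝ) (b : Fin M → Fin n → ℝ)
    (hop : ∀ j, opNorm (A j) ≤ 1)
    {Ω : Type} [MeasurableSpace Ω] (P : Measure Ω) [IsProbabilityMeasure P]
    (ξ : Ω → Fin n → ℝ) (hξ : Measurable ξ) (hlaw : P.map ξ = gaussPi n σ)
    (θhat : Ω → Fin M → ℝ) (hθmeas : Measurable θhat)
    (hθmem : ∀ ω, θhat ω ∈ simplex M)
    (hθmin : ∀ ω, ∀ θ ∈ simplex M,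
      Hpen A b σ (f + ξ ω) (θhat ω) ≤ Hpen A b σ (f + ξ ω) θ) :
    ∫ ω, sqNorm (muV A b (f + ξ ω) (θhat ω) - f) ∂P ≤
      (∫ ω, (⨅ j, sqNorm ((A j).mulVec (f + ξ ω) + b j - f)) ∂P)
        + 92 * σ ^ 2 * Real.log (Real.exp 1 * M) := by
  have hM0 : 0 < M := by omega
  have : Nonempty (Fin M) := ⟨⟨0, hM0⟩⟩
  have hMr : (0:ℝ) < M := by exact_mod_cast hM0
  have hlog : Real.log (Real.exp 1 * M) = 1 + Real.log M := by
    rw [Real.log_mul (Real.exp_pos 1).ne' hMr.ne', Real.log_exp]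
  have hlogM : 0 ≤ Real.log M := Real.log_natCast_nonneg M
  set Z : Ω → Fin M → Fin M → ℝ := fun ω j k =>
    ZZ σ (A j - A k) ((A j - A k).mulVec f + (b j - b k)) (ξ ω) with hZ
  set R : Ω → ℝ := fun ω => ⨅ j, sqNorm ((A j).mulVec (f + ξ ω) + b j - f) with hR
  -- integrability of R
  have hRj : ∀ j, Integrable (fun ω => sqNorm ((A j).mulVec (f + ξ ω) + b j - f)) P := by
    intro j
    have h := quad_integrable σ (A j) (b j) f
    rw [← hlaw] at h
    exact h.comp_measurable hξ
  have hRmeas : AEStronglyMeasurable R P := by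
    apply AEMeasurable.aestronglyMeasurable
    exact AEMeasurable.iInf fun j => (hRj j).aestronglyMeasurable.aemeasurable
  have hRint : Integrable R P := by
    refine (hRj ⟨0, hM0⟩).mono hRmeas (ae_of_all _ fun ω => ?_)
    have h0 : 0 ≤ R ω := Real.iInf_nonneg fun j => sqNorm_nonneg' _
    rw [Real.norm_of_nonneg h0, Real.norm_of_nonneg (sqNorm_nonneg' _)]
    exact ciInf_le (Set.finite_range _).bddBelow _
  -- pointwise bound
  have hpt : ∀ ω T, (∀ j k, Z ω j k ≤ T) →
      sqNorm (muV A b (f + ξ ω) (θhat ω) - f) ≤ R ω + T := by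
    intro ω T hT
    obtain ⟨k, hk⟩ := exists_eq_ciInf_of_finite
      (f := fun j => sqNorm ((A j).mulVec (f + ξ ω) + b j - f))
    have h1 := pointwise A b σ f (ξ ω) (θhat ω) (hθmem ω) (hθmin ω) k
    have h2 : ∑ j, θhat ω j * Z ω j k ≤ ∑ j, θhat ω j * T :=
      Finset.sum_le_sum fun j _ => mul_le_mul_of_nonneg_left (hT j k) ((hθmem ω).1 j)
    rw [← Finset.sum_mul, (hθmem ω).2, one_mul] at h2
    have h3 : R ω = sqNorm ((A k).mulVec (f + ξ ω) + b k - f) := hk.symm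
    rw [h3]
    exact h1.trans (by gcongr)
  by_cases hσ : σ = 0
  · have hξ0 : ∀ᵐ ω ∂P, ξ ω = 0 := by
      have h1 : ∀ᵐ x ∂(P.map ξ), x = 0 := by
        rw [hlaw, gaussPi_eq, hσ]
        rw [ae_map_iff (p := fun x => x = 0) (Measurable.aemeasurable (by fun_prop)) (measurableSet_singleton (0 : Fin n → ℝ))]
        simp
      exact ae_of_ae_map hξ.aemeasurable h1
    have : ∫ ω, sqNorm (muV A b (f + ξ ω) (θhat ω) - f) ∂P ≤ ∫ ω, R ω ∂P := by
      refine integral_mono_of_nonneg (ae_of_all _ fun ω => sqNorm_nonneg' _) hRint ?_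
      filter_upwards [hξ0] with ω hω
      have := hpt ω 0 (fun j k => by
        simp only [hZ, hω, ZZ, hσ]
        have := sqNorm_nonneg' ((A j - A k).mulVec 0 + ((A j - A k).mulVec f + (b j - b k)))
        simp only [zero_dotProduct]
        norm_num
        simp only [Matrix.mulVec_zero, zero_add] at this
        linarith)
      simpa using this
    rw [hσ]
    simpa using this
  · have hK : 0 < 46 * σ ^ 2 := by positivity
    have hE : ∀ j k, Integrable (fun ω => Real.exp (Z ω j k / (46 * σ ^ 2))) P ∧
        ∫ ω, Real.exp (Z ω j k / (46 * σ ^ 2)) ∂P ≤ 1 := by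
      intro j k
      have h := key_sigma σ hσ (A j - A k) ((A j - A k).mulVec f + (b j - b k))
        (diff_bound _ _ (hop j) (hop k))
      rw [← hlaw] at h
      refine ⟨h.1.comp_measurable hξ, ?_⟩
      rw [integral_map hξ.aemeasurable h.1.aestronglyMeasurable] at h
      exact h.2
    have hS : Integrable (fun ω => ∑ j, ∑ k, Real.exp (Z ω j k / (46 * σ ^ 2))) P :=
      integrable_finsetSum _ fun j _ => integrable_finsetSum _ fun k _ => (hE j k).1
    have hSle : ∫ ω, ∑ j, ∑ k, Real.exp (Z ω j k / (46 * σ ^ 2)) ∂P ≤ (M:ℝ) ^ 2 := by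
      rw [integral_finsetSum _ fun j _ => integrable_finsetSum _ fun k _ => (hE j k).1]
      calc _ ≤ ∑ j : Fin M, ∑ k : Fin M, (1:ℝ) := by
            apply Finset.sum_le_sum; intro j _
            rw [integral_finsetSum _ fun k _ => (hE j k).1]
            exact Finset.sum_le_sum fun k _ => (hE j k).2
        _ = _ := by simp [sq]
    set W : Ω → ℝ := fun ω => (46 * σ ^ 2) * (2 * Real.log M - 1 +
      (∑ j, ∑ k, Real.exp (Z ω j k / (46 * σ ^ 2))) / M ^ 2) with hW
    have hI1 : Integrable (fun ω => 2 * Real.log M - 1 +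
      (∑ j, ∑ k, Real.exp (Z ω j k / (46 * σ ^ 2))) / (M:ℝ) ^ 2) P :=
      (integrable_const _).add (hS.div_const _)
    have hWint : Integrable W P := hI1.const_mul _
    have hWle : ∫ ω, W ω ∂P ≤ 46 * σ ^ 2 * (2 * Real.log M) := by
      simp only [hW]
      rw [integral_const_mul, integral_add (integrable_const _) (hS.div_const _), integral_div]
      apply mul_le_mul_of_nonneg_left _ hK.le
      have : (∫ ω, ∑ j, ∑ k, Real.exp (Z ω j k / (46 * σ ^ 2)) ∂P) / (M:ℝ) ^ 2 ≤ 1 := by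
        rw [div_le_one (by positivity)]; exact hSle
      simp only [integral_const, probReal_univ, one_smul]
      linarith
    have hmain : ∫ ω, sqNorm (muV A b (f + ξ ω) (θhat ω) - f) ∂P ≤ ∫ ω, (R ω + W ω) ∂P :=
      integral_mono_of_nonneg (ae_of_all _ fun ω => sqNorm_nonneg' _) (hRint.add hWint)
        (ae_of_all _ fun ω => hpt ω (W ω) fun j k => max_bound _ hK M hM (Z ω) j k)
    rw [integral_add hRint hWint] at hmain
    rw [hlog]
    have : 0 ≤ σ ^ 2 := sq_nonneg σ
    linarith

end
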